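/- arXiv:2406.01973 — 6 statements merged into one kernel-verified Lean document; each statement's English description precedes it below -/
import Mathlib

section
/- Let t ≥ 1 be a natural number, let α be real with 1/(2(t+1)) < α < 1/2, and let Y ∈ [0,1] satisfy Y > ((t+1)α − 1/2)/t (equivalently β(t, α, Y) > 0). Then |α − tY/(t+1)| − |α − Y| > 0 if and only if Y < (t+1)α/(t + 1/2). -/
/-- `β(t, α, Y) := |α − tY/(t+1) − 1/(t+1)| − |α − tY/(t+1)|`. -/
noncomputable def beta (t : ℕ) (α Y : ℝ) : ℝ :=
  |α - (t : ℝ) * Y / ((t : ℝ) + 1) - 1 / ((t : ℝ) + 1)| - |α - (t : ℝ) * Y / ((t : ℝ) + 1)|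

theorem stmt_2 (t : ℕ) (ht : 1 ≤ t) (α : ℝ)
    (hα0 : 1 / (2 * ((t : ℝ) + 1)) < α) (hα1 : α < 1 / 2)
    (Y : ℝ) (hY0 : 0 ≤ Y) (hY1 : Y ≤ 1)
    (hYb : Y > (((t : ℝ) + 1) * α - 1 / 2) / (t : ℝ)) :
    |α - (t : ℝ) * Y / ((t : ℝ) + 1)| - |α - Y| > 0 ↔
      Y < ((t : ℝ) + 1) * α / ((t : ℝ) + 1 / 2) := by
  have ht' : (1 : ℝ) ≤ (t : ℝ) := by exact_mod_cast ht
  generalize (t : ℝ) = s at *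
  have hs : 0 < s := by linarith
  have hs1 : 0 < s + 1 := by linarith
  have h1 : 1 / 2 < (s + 1) * α := by
    rw [div_lt_iff₀ (by positivity)] at hα0
    linarith
  have hY : 0 < Y := lt_trans (div_pos (by linarith) hs) hYb
  have key : s * Y / (s + 1) = Y - Y / (s + 1) := by field_simp; ring
  have hd : 0 < Y / (s + 1) := div_pos hY hs1
  have hd' : Y / (s + 1) * (s + 1) = Y := by field_simp
  rw [key, gt_iff_lt, sub_pos, ← sq_lt_sq, lt_div_iff₀ (by linarith)]
  generalize Y / (s + 1) = d at *
  subst hd'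
  constructor
  · intro h
    have h2 : 0 < d * (2 * α - 2 * (d * (s + 1)) + d) := by nlinarith
    have h3 := pos_of_mul_pos_right h2 hd.le
    have h4 := mul_pos h3 hs1
    nlinarith
  · intro h
    have h3 : 0 < (s + 1) * (2 * α - 2 * (d * (s + 1)) + d) := by nlinarith
    have h4 := pos_of_mul_pos_right h3 hs1.le
    have h5 := mul_pos hd h4
    nlinarith
end

section
/- Let t ≥ 1 be a natural number, let α be real with 1/(2(t+1)) < α < 1/2, and let Y = ((t+1)α − 1/2)/t (equivalently β(t, α, Y) = 0). Then for every p ∈ [0,1], p·(|α − (tY+1)/(t+1)| − |α − tY/(t+1)|) + |α − tY/(t+1)| − |α − Y| > 0; in particular the first term vanishes and the expression equals 1/(2(t+1)) − (1/2 − α)/t, which is positive precisely because α > 1/(2(t+1)). -/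
theorem stmt_3 (t : ℕ) (ht : 1 ≤ t) (α : ℝ)
    (hα0 : 1 / (2 * ((t : ℝ) + 1)) < α) (hα1 : α < 1 / 2)
    (Y : ℝ) (hY : Y = (((t : ℝ) + 1) * α - 1 / 2) / (t : ℝ)) :
    ∀ p : ℝ, 0 ≤ p → p ≤ 1 →
      p * (|α - ((t : ℝ) * Y + 1) / ((t : ℝ) + 1)| - |α - (t : ℝ) * Y / ((t : ℝ) + 1)|)
          + |α - (t : ℝ) * Y / ((t : ℝ) + 1)| - |α - Y| > 0 ∧
      |α - ((t : ℝ) * Y + 1) / ((t : ℝ) + 1)| - |α - (t : ℝ) * Y / ((t : ℝ) + 1)| = 0 ∧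
      p * (|α - ((t : ℝ) * Y + 1) / ((t : ℝ) + 1)| - |α - (t : ℝ) * Y / ((t : ℝ) + 1)|)
          + |α - (t : ℝ) * Y / ((t : ℝ) + 1)| - |α - Y|
        = 1 / (2 * ((t : ℝ) + 1)) - (1 / 2 - α) / (t : ℝ) ∧
      (0 < 1 / (2 * ((t : ℝ) + 1)) - (1 / 2 - α) / (t : ℝ) ↔ 1 / (2 * ((t : ℝ) + 1)) < α) := by
  intro p _ _
  have h0 : (0 : ℝ) < t := by exact_mod_cast ht
  have h1 : (0 : ℝ) < (t : ℝ) + 1 := by linarith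
  have e1 : α - (t : ℝ) * Y / ((t : ℝ) + 1) = 1 / (2 * ((t : ℝ) + 1)) := by
    rw [hY]; field_simp; ring
  have e2 : α - ((t : ℝ) * Y + 1) / ((t : ℝ) + 1) = -(1 / (2 * ((t : ℝ) + 1))) := by
    rw [add_div, ← sub_sub, e1]; field_simp; ring
  have e3 : α - Y = (1 / 2 - α) / (t : ℝ) := by
    rw [hY]; field_simp; ring
  have e4 : 1 / (2 * ((t : ℝ) + 1)) - (1 / 2 - α) / (t : ℝ)
      = (α - 1 / (2 * ((t : ℝ) + 1))) / (t : ℝ) := by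
    field_simp; ring
  have p1 : 0 < 1 / (2 * ((t : ℝ) + 1)) := by positivity
  have p2 : 0 < (1 / 2 - α) / (t : ℝ) := div_pos (by linarith) h0
  have p3 : 0 < (α - 1 / (2 * ((t : ℝ) + 1))) / (t : ℝ) := div_pos (by linarith) h0
  rw [e1, e2, e3, abs_neg, abs_of_pos p1, abs_of_pos p2, sub_self, mul_zero, zero_add]
  refine ⟨by rw [e4]; exact p3, rfl, rfl, ?_⟩
  rw [e4, div_pos_iff_of_pos_right h0, sub_pos]
end

section
/- Let t ≥ 1 be a natural number, let α be real with 1/(2(t+1)) < α < 1/2, and let Y(t) ∈ [0,1]. Define the ideal violation V*(t+1) := 1 if β(t, α, Y(t)) < 0 and V*(t+1) := 0 otherwise, and set Y(t+1) := (t·Y(t) + V*(t+1))/(t+1). Then |α − Y(t+1)| ≤ |α − Y(t)| if and only if Y(t) does not lie in the critical region κ(α, t). -/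
/-- The critical region `κ(α, t) := ( ((t+1)α − 1/2)/(t + 1/2), (t+1)α/(t + 1/2) )`. -/
def kappa (α : ℝ) (t : ℕ) : Set ℝ :=
  Set.Ioo ((((t : ℝ) + 1) * α - 1 / 2) / ((t : ℝ) + 1 / 2)) (((t : ℝ) + 1) * α / ((t : ℝ) + 1 / 2))

theorem stmt_5 (t : ℕ) (ht : 1 ≤ t) (α : ℝ)
    (hα0 : 1 / (2 * ((t : ℝ) + 1)) < α) (hα1 : α < 1 / 2)
    (Y : ℝ) (hY0 : 0 ≤ Y) (hY1 : Y ≤ 1)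
    (Vstar : ℝ) (hVstar : Vstar = if beta t α Y < 0 then 1 else 0)
    (Y' : ℝ) (hY' : Y' = ((t : ℝ) * Y + Vstar) / ((t : ℝ) + 1)) :
    |α - Y'| ≤ |α - Y| ↔ Y ∉ kappa α t := by
  have hs : (1 : ℝ) ≤ t := by exact_mod_cast ht
  generalize hsd : (t : ℝ) = s at *
  have hp : 0 < s + 1 := by linarith
  have hA : 1 / 2 < (s + 1) * α := by
    rw [div_lt_iff₀ (by positivity)] at hα0
    linarith
  have hB : (s + 1) * α < (s + 1) / 2 := by nlinarith
  have hk : Y ∉ kappa α t ↔ ((s + 1 / 2) * Y ≤ (s + 1) * α - 1 / 2 ∨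
      (s + 1) * α ≤ (s + 1 / 2) * Y) := by
    unfold kappa
    rw [hsd, Set.mem_Ioo, not_and_or, not_lt, not_lt, le_div_iff₀ (by linarith),
      div_le_iff₀ (by linarith), mul_comm Y]
  have hb : beta t α Y < 0 ↔ s * Y + 1 / 2 < (s + 1) * α := by
    unfold beta
    rw [hsd, sub_neg, ← sq_lt_sq]
    have e : (α - s * Y / (s + 1) - 1 / (s + 1)) ^ 2 - (α - s * Y / (s + 1)) ^ 2
        = (s * Y + 1 / 2 - (s + 1) * α) * (2 / (s + 1) ^ 2) := by
      field_simp
      ring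
    have h2 : 0 < 2 / (s + 1) ^ 2 := by positivity
    rw [← sub_neg, e, mul_neg_iff]
    constructor
    · rintro (h | h) <;> linarith [h.1, h.2]
    · intro h
      exact Or.inr ⟨by linarith, h2⟩
  have hY'2 : (s + 1) * Y' = s * Y + Vstar := by
    rw [hY']
    field_simp
  have key : |α - Y'| ≤ |α - Y| ↔
      (Vstar - Y) * ((2 * s + 1) * Y + Vstar - 2 * ((s + 1) * α)) ≤ 0 := by
    rw [← sq_le_sq, ← sub_nonpos]
    have e : (Vstar - Y) * ((2 * s + 1) * Y + Vstar - 2 * ((s + 1) * α))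
        = (s + 1) ^ 2 * ((α - Y') ^ 2 - (α - Y) ^ 2) := by
      have : Vstar = (s + 1) * Y' - s * Y := by linarith
      rw [this]
      ring
    rw [e]
    have h2 : 0 < (s + 1) ^ 2 := by positivity
    constructor
    · intro h
      nlinarith
    · intro h
      by_contra! h3
      nlinarith [mul_pos h2 h3]
  rw [key, hk, hVstar]
  clear key hk
  by_cases h : beta t α Y < 0
  · rw [if_pos h]
    rw [hb] at h
    have hY : 0 < 1 - Y := by
      by_contra! h3
      have : Y = 1 := by linarith
      subst this
      linarith
    constructor
    · intro h1
      left
      by_contra! h3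
      nlinarith [mul_pos hY (show 0 < (2 * s + 1) * Y + 1 - 2 * ((s + 1) * α) by linarith)]
    · rintro (h1 | h1)
      · exact mul_nonpos_of_nonneg_of_nonpos hY.le (by linarith)
      · exfalso
        linarith
  · rw [if_neg h]
    rw [hb, not_lt] at h
    have hY : 0 < Y := by
      by_contra! h3
      have : Y = 0 := by linarith
      subst this
      linarith
    constructor
    · intro h1
      right
      by_contra! h3
      nlinarith [mul_pos hY (show 0 < 2 * ((s + 1) * α) - (2 * s + 1) * Y by linarith)]
    · rintro (h1 | h1)
      · exfalso
        linarith
      · exact mul_nonpos_of_nonpos_of_nonneg (by linarith) (by linarith)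
end

section
/- (Theorem 1) Fix a natural number t0 ≥ 1 and a real α with 1/(2(t0+1)) < α < 1/2. Let Y follow the ideal violation dynamics started from any Y(t0) ∈ [0,1], and set Z*(t) := |α − Y(t)|. Then Z* is monotonically decreasing from t0 onward, i.e., Z*(t+1) ≤ Z*(t) for all t ≥ t0, if and only if Y(t) ∉ κ(α, t) for all t ≥ t0. -/
lemma my_nonpos_iff {a b : ℝ} (h : 0 < a) : a * b ≤ 0 ↔ b ≤ 0 := by
  rw [← neg_nonneg, ← mul_neg, mul_nonneg_iff_of_pos_left h, neg_nonneg]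

lemma beta_neg_iff (t : ℕ) (α y : ℝ) :
    beta t α y < 0 ↔ 1 / 2 < ((t : ℝ) + 1) * α - t * y := by
  have hs : (0 : ℝ) < (t : ℝ) + 1 := by positivity
  unfold beta
  have e1 : α - (t : ℝ) * y / ((t : ℝ) + 1) - 1 / ((t : ℝ) + 1)
      = (((t : ℝ) + 1) * α - t * y - 1) / ((t : ℝ) + 1) := by field_simp
  have e2 : α - (t : ℝ) * y / ((t : ℝ) + 1)
      = (((t : ℝ) + 1) * α - t * y) / ((t : ℝ) + 1) := by field_simp
  rw [e1, e2, sub_neg, abs_div, abs_div, abs_of_pos hs, div_lt_div_iff_of_pos_right hs,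
    ← sq_lt_sq]
  constructor <;> intro h <;> nlinarith

lemma step_iff (t : ℕ) (ht : 1 ≤ t) (α y y' : ℝ) (h0 : 1 / 2 < ((t : ℝ) + 1) * α)
    (h1 : α < 1 / 2)
    (hy : y' = ((t : ℝ) * y + (if beta t α y < 0 then 1 else 0)) / ((t : ℝ) + 1)) :
    |α - y'| ≤ |α - y| ↔ y ∉ kappa α t := by
  have hn : (1 : ℝ) ≤ t := by exact_mod_cast ht
  simp only [beta_neg_iff] at hy
  have hs : (0 : ℝ) < (t : ℝ) + 1 := by positivity
  have hh : (0 : ℝ) < (t : ℝ) + 1 / 2 := by positivity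
  unfold kappa
  rw [Set.mem_Ioo, div_lt_iff₀ hh, lt_div_iff₀ hh]
  generalize (t : ℝ) = n at *
  have key : |α - y'| ≤ |α - y| ↔
      ((n + 1) * y - (n + 1) * y') * (2 * ((n + 1) * α) - (n + 1) * y - (n + 1) * y') ≤ 0 := by
    rw [← sq_le_sq]
    have e : ((n + 1) * y - (n + 1) * y') * (2 * ((n + 1) * α) - (n + 1) * y - (n + 1) * y')
        = (n + 1) ^ 2 * ((α - y') ^ 2 - (α - y) ^ 2) := by ring
    rw [e, my_nonpos_iff (by positivity), sub_nonpos]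
  rw [key]
  have hy2 : (n + 1) * y' = n * y + (if 1 / 2 < (n + 1) * α - n * y then 1 else 0) := by
    rw [hy]; field_simp
  rw [hy2]
  clear hy hy2 key
  split_ifs with hc
  · have y1 : y < 1 := by nlinarith
    have e : (n + 1) * y - (n * y + 1) = -(1 - y) := by ring
    rw [e, neg_mul, neg_nonpos, mul_nonneg_iff_of_pos_left (by linarith)]
    constructor
    · rintro h ⟨h2, h3⟩
      nlinarith
    · intro h
      by_contra hcon
      exact h ⟨by nlinarith, by nlinarith⟩
  · have y0 : 0 < y := by
      by_contra hcon
      nlinarith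
    have e : (n + 1) * y - (n * y + 0) = y := by ring
    rw [e, my_nonpos_iff y0]
    constructor
    · rintro h ⟨h2, h3⟩
      nlinarith
    · intro h
      by_contra hcon
      exact h ⟨by nlinarith, by nlinarith⟩

theorem stmt_6 (t0 : ℕ) (ht0 : 1 ≤ t0) (α : ℝ)
    (hα0 : 1 / (2 * ((t0 : ℝ) + 1)) < α) (hα1 : α < 1 / 2)
    (Y : ℕ → ℝ) (hY0 : 0 ≤ Y t0) (hY1 : Y t0 ≤ 1)
    (hdyn : ∀ t, t0 ≤ t →
      Y (t + 1) = ((t : ℝ) * Y t + (if beta t α (Y t) < 0 then 1 else 0)) / ((t : ℝ) + 1)) :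
    (∀ t, t0 ≤ t → |α - Y (t + 1)| ≤ |α - Y t|) ↔ (∀ t, t0 ≤ t → Y t ∉ kappa α t) := by
  refine forall_congr' fun t => forall_congr' fun ht => ?_
  refine step_iff t (ht0.trans ht) α (Y t) (Y (t + 1)) ?_ hα1 (hdyn t ht)
  have hp : (0 : ℝ) < 2 * ((t0 : ℝ) + 1) := by positivity
  rw [div_lt_iff₀ hp] at hα0
  have hc : (t0 : ℝ) ≤ t := by exact_mod_cast ht
  have ha : 0 < α := by
    by_contra hcon
    nlinarith
  nlinarith
end

section
/- (Lemma 2) Fix a natural number t0 ≥ 1 and a real α with 1/(2(t0+1)) < α < 1/2. Let Y follow the ideal violation dynamics started from Y(t0) ∈ [0,1], and suppose Y(t0) ∈ κ(α, t0). Then there exists a time t' > t0 such that Y(t') ∉ κ(α, t'). -/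
theorem stmt_8 (t0 : ℕ) (ht0 : 1 ≤ t0) (α : ℝ)
    (hα0 : 1 / (2 * ((t0 : ℝ) + 1)) < α) (hα1 : α < 1 / 2)
    (Y : ℕ → ℝ) (hY0 : 0 ≤ Y t0) (hY1 : Y t0 ≤ 1)
    (hdyn : ∀ t, t0 ≤ t →
      Y (t + 1) = ((t : ℝ) * Y t + (if beta t α (Y t) < 0 then 1 else 0)) / ((t : ℝ) + 1))
    (hstart : Y t0 ∈ kappa α t0) :
    ∃ t' : ℕ, t0 < t' ∧ Y t' ∉ kappa α t' := by
  by_contra hcon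
  push Not at hcon
  have hk : ∀ t, t0 ≤ t → Y t ∈ kappa α t := by
    intro t ht
    rcases Nat.eq_or_lt_of_le ht with h | h
    · rw [← h]; exact hstart
    · exact hcon t h
  have hα : 0 < α := lt_trans (by positivity) hα0
  have hk2 : ∀ t, t0 ≤ t → ((t : ℝ) + 1) * α - 1 / 2 < Y t * ((t : ℝ) + 1 / 2) ∧
      Y t * ((t : ℝ) + 1 / 2) < ((t : ℝ) + 1) * α := by
    intro t ht
    have hp : (0 : ℝ) < (t : ℝ) + 1 / 2 := by positivity
    obtain ⟨h1, h2⟩ := hk t ht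
    exact ⟨(div_lt_iff₀ hp).1 h1, (lt_div_iff₀ hp).1 h2⟩
  have main : ∀ t, t0 ≤ t → (0 ≤ Y t ∧ Y t ≤ 1) → (t + 1 : ℝ) * Y (t + 1) = t * Y t := by
    intro t ht hY
    have hp : (0 : ℝ) < (t : ℝ) + 1 := by positivity
    have hd := hdyn t ht
    rw [eq_div_iff hp.ne'] at hd
    by_cases hb : beta t α (Y t) < 0
    · exfalso
      rw [if_pos hb] at hd
      have h1 : (1 / 2 : ℝ) < (t + 1) * α - t * Y t := by
        unfold beta at hb
        have hb' := sq_lt_sq.2 (sub_neg.1 hb)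
        have e1 : α - (t : ℝ) * Y t / ((t : ℝ) + 1) = ((t + 1) * α - t * Y t) / (t + 1) := by
          field_simp
        rw [e1, ← sub_div, div_pow, div_pow, div_lt_div_iff_of_pos_right (by positivity)] at hb'
        nlinarith
      have h2 := hk2 t ht
      have h3 := hk2 (t + 1) (by omega)
      push_cast at h3
      have h4 : Y t ≤ Y (t + 1) := by
        by_contra h
        push Not at h
        nlinarith
      nlinarith
    · rw [if_neg hb] at hd
      linarith
  have ind : ∀ n : ℕ, (0 ≤ Y (t0 + n) ∧ Y (t0 + n) ≤ 1) ∧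
      ((t0 + n : ℕ) : ℝ) * Y (t0 + n) = t0 * Y t0 := by
    intro n
    induction n with
    | zero => exact ⟨⟨hY0, hY1⟩, rfl⟩
    | succ n ih =>
      have h := main (t0 + n) (by omega) ih.1
      have hp : (0 : ℝ) ≤ ((t0 + n : ℕ) : ℝ) := by positivity
      obtain ⟨⟨a, b⟩, c⟩ := ih
      rw [← add_assoc]
      refine ⟨⟨?_, ?_⟩, ?_⟩
      · by_contra hh
        push Not at hh
        nlinarith
      · by_contra hh
        push Not at hh
        nlinarith
      · rw [← c, ← h]; push_cast; ring
  obtain ⟨n, hn⟩ := exists_nat_gt ((t0 + 2 : ℝ) / α)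
  rw [div_lt_iff₀ hα] at hn
  obtain ⟨⟨a, b⟩, c⟩ := ind n
  have h := (hk2 (t0 + n) (by omega)).1
  have h5 : (t0 : ℝ) * Y t0 ≤ t0 := by
    have : (0 : ℝ) ≤ t0 := by positivity
    nlinarith
  have h6 : (n : ℝ) * α ≤ (((t0 + n : ℕ) : ℝ) + 1) * α := by
    apply mul_le_mul_of_nonneg_right _ hα.le
    push_cast
    have : (0 : ℝ) ≤ t0 := by positivity
    linarith
  nlinarith
end

section
/- (Theorem 2) Fix a natural number t0 ≥ 1 and a real α with 1/(2(t0+1)) < α < 1/2. Let Y follow the ideal violation dynamics started from any initial value Y(t0) ∈ [0,1]. Then the time-average of violations converges to the maximum allowable violation probability: lim_{t→∞} Y(t) = α. -/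
open Filter Topology

theorem stmt_9 (t0 : ℕ) (ht0 : 1 ≤ t0) (α : ℝ)
    (hα0 : 1 / (2 * ((t0 : ℝ) + 1)) < α) (hα1 : α < 1 / 2)
    (Y : ℕ → ℝ) (hY0 : 0 ≤ Y t0) (hY1 : Y t0 ≤ 1)
    (hdyn : ∀ t, t0 ≤ t →
      Y (t + 1) = ((t : ℝ) * Y t + (if beta t α (Y t) < 0 then 1 else 0)) / ((t : ℝ) + 1)) :
    Tendsto Y atTop (𝓝 α) := by
  have hαpos : 0 < α := lt_trans (by positivity) hα0
  set C : ℝ := |(t0 : ℝ) * Y t0 - α * t0| + 1 / 2 with hC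
  have key : ∀ t, t0 ≤ t → |(t : ℝ) * Y t - α * t| ≤ C := by
    intro t ht
    induction t, ht using Nat.le_induction with
    | base => linarith
    | succ t ht ih =>
      have hp : (0 : ℝ) < (t : ℝ) + 1 := by positivity
      have hC2 : 1 / 2 ≤ C := by rw [hC]; linarith [abs_nonneg ((t0 : ℝ) * Y t0 - α * t0)]
      have hb : beta t α (Y t) < 0 ↔ (t : ℝ) * Y t - α * t - α < -(1 / 2) := by
        unfold beta
        have e1 : α - (t : ℝ) * Y t / ((t : ℝ) + 1)
            = (α * (t + 1) - t * Y t) / ((t : ℝ) + 1) := by field_simp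
        have e2 : (α * (t + 1) - t * Y t) / ((t : ℝ) + 1) - 1 / ((t : ℝ) + 1)
            = (α * (t + 1) - t * Y t - 1) / ((t : ℝ) + 1) := by ring
        rw [e1, e2, abs_div, abs_div, sub_neg, div_lt_div_iff_of_pos_right (by positivity),
          ← sq_lt_sq]
        constructor <;> intro h <;> nlinarith
      have hs : ((t + 1 : ℕ) : ℝ) * Y (t + 1)
          = (t : ℝ) * Y t + (if beta t α (Y t) < 0 then 1 else 0) := by
        rw [hdyn t ht]; push_cast; field_simp
      rw [hs]
      push_cast
      rw [abs_le] at ih ⊢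
      split_ifs with h
      · rw [hb] at h
        constructor <;> linarith [ih.1, ih.2]
      · rw [hb] at h
        constructor <;> linarith [ih.1, ih.2]
  rw [tendsto_iff_norm_sub_tendsto_zero]
  refine squeeze_zero' (Eventually.of_forall fun _ => norm_nonneg _) ?_
    (tendsto_const_div_atTop_nhds_zero_nat C)
  filter_upwards [eventually_ge_atTop t0] with t ht
  have hp : (0 : ℝ) < t := by exact_mod_cast (lt_of_lt_of_le ht0 ht)
  rw [le_div_iff₀ hp, Real.norm_eq_abs]
  have h := key t ht
  have e : (t : ℝ) * Y t - α * t = (Y t - α) * t := by ring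
  rwa [e, abs_mul, abs_of_pos hp] at h
end
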